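/- Let F be an infinite field. Define B_2(F) as the quotient of the free abelian group ℤ[F^*] by the subgroup R_2(F) generated by {1} together with all five-term elements Σ_{i=1}^{5} (−1)^i {r(z_1, …, ẑ_i, …, z_5)} for quintuples of pairwise distinct elements z_1, …, z_5 of F, and write {x}_2 for the class of {x}. Let δ : ℤ[F^*] → B_2(F) ⊗_ℤ F^* be the homomorphism {x} ↦ {x}_2 ⊗ x. For a 6-tuple (l_0, …, l_5) of vectors in F³ in generic position (any three of them linearly independent), define the element r_3(l_0, …, l_5) := Σ_{σ ∈ S_6} sgn(σ) { ρ(l_{σ(0)}, …, l_{σ(5)}) } ∈ ℤ[F^*], where ρ(l_0,…,l_5) = (Δ(l_0,l_1,l_3)Δ(l_1,l_2,l_4)Δ(l_2,l_0,l_5)) / (Δ(l_0,l_1,l_4)Δ(l_1,l_2,l_5)Δ(l_2,l_0,l_3)). Then for any seven vectors x_1, …, x_7 ∈ F³ in generic position (any three linearly independent), the element Σ_{i=1}^{7} (−1)^i r_3(x_1, …, x̂_i, …, x_7) is annihilated by δ after tensoring with ℚ: its image in (B_2(F) ⊗_ℤ F^*) ⊗_ℤ ℚ is zero. (This is the generalization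 of Abel's equation making B_3(F) → B_2(F) ⊗ F^* → ⋀³F^* into a complex.) -/

import Mathlib

set_option synthInstance.maxHeartbeats 1000000
set_option maxHeartbeats 1000000

open scoped TensorProduct

noncomputable section

variable (F : Type*) [Field F]

/-- The cross-ratio `r(a,b,c,d) = ((a−c)(b−d))/((a−d)(b−c))`. -/
def crossRatio (a b c d : F) : F := ((a - c) * (b - d)) / ((a - d) * (b - c))

/-- The five-term (Abel) elements of `ℤ[F^*]`:
`Σ_{i=1}^5 (−1)^i {r(z_1,…,ẑ_i,…,z_5)}` for pairwise distinct `z_1,…,z_5 ∈ F`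
(the cross-ratios being the units `r i`). -/
def fiveTermSet : Set (Fˣ →₀ ℤ) :=
  {D | ∃ (z : Fin 5 → F) (r : Fin 5 → Fˣ), Function.Injective z ∧
    (∀ i : Fin 5, (r i : F) = crossRatio F (z (i.succAbove 0)) (z (i.succAbove 1))
        (z (i.succAbove 2)) (z (i.succAbove 3))) ∧
    D = ∑ i : Fin 5, (-1 : ℤ) ^ ((i : ℕ) + 1) • Finsupp.single (r i) (1 : ℤ)}

/-- The subgroup `R_2(F) ⊆ ℤ[F^*]` generated by `{1}` and the five-term elements. -/
def R2 : AddSubgroup (Fˣ →₀ ℤ) :=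
  AddSubgroup.closure ({Finsupp.single 1 1} ∪ fiveTermSet F)

/-- `B_2(F) = ℤ[F^*]/R_2(F)`. -/
abbrev B2 : Type _ := (Fˣ →₀ ℤ) ⧸ R2 F

/-- The homomorphism `δ : ℤ[F^*] → B_2(F) ⊗ F^*`, `{x} ↦ {x}_2 ⊗ x`. -/
def deltaBS : (Fˣ →₀ ℤ) →+ (B2 F ⊗[ℤ] Additive Fˣ) :=
  Finsupp.liftAddHom fun x =>
    (LinearMap.toSpanSingleton ℤ (B2 F ⊗[ℤ] Additive Fˣ)
      (((QuotientAddGroup.mk (Finsupp.single x 1) : B2 F)) ⊗ₜ[ℤ]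
        Additive.ofMul x)).toAddMonoidHom

/-- `Δ(a,b,c)`: the determinant of the `3×3` matrix with rows `a`, `b`, `c`. -/
def det3 (a b c : Fin 3 → F) : F := Matrix.det (Matrix.of ![a, b, c])

/-- The generalized cross-ratio
`ρ(l_0,…,l_5) = (Δ(l_0,l_1,l_3)Δ(l_1,l_2,l_4)Δ(l_2,l_0,l_5)) /
(Δ(l_0,l_1,l_4)Δ(l_1,l_2,l_5)Δ(l_2,l_0,l_3))` of six vectors in `F³`. -/
def tripleRatio (l : Fin 6 → Fin 3 → F) : F :=
  (det3 F (l 0) (l 1) (l 3) * det3 F (l 1) (l 2) (l 4) * det3 F (l 2) (l 0) (l 5)) /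
    (det3 F (l 0) (l 1) (l 4) * det3 F (l 1) (l 2) (l 5) * det3 F (l 2) (l 0) (l 3))

/-!
Put `p = l₀l₃ ∩ l₂l₅`. Seen from `l₁`, the points `l₀, l₂, p, l₄` have cross-ratio `ρ(l₀,…,l₅)`, so
the five-term relation for the images of `l₀, l₂, l₃, p, l₄` expresses `{ρ}₂` by four other classes.
Tensor it with `Δ(l₀,l₁,l₃)` and alternate over all seven vectors, which includes the alternating
sum over the omitted one. Up to 2-torsion, three of the four terms are fixed by a transposition and
vanish, while the fourth becomes minus the `ρ` term under `l₀ ↔ l₃`; so the `ρ` term vanishes too.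
The permutations `(0 1 2)(3 4 5)`, which fixes `ρ`, and `(0 1)(3 4)`, which inverts it, carry this
over to the other five determinants in `ρ`, and `{ρ}₂ ⊗ ρ` is a signed sum of the six terms.
-/

section BlochGroup

variable {F}

theorem crossRatio_ne_zero {a b c d : F} (hac : a ≠ c) (hbd : b ≠ d) (had : a ≠ d)
    (hbc : b ≠ c) : crossRatio F a b c d ≠ 0 :=
  div_ne_zero (mul_ne_zero (sub_ne_zero.2 hac) (sub_ne_zero.2 hbd))
    (mul_ne_zero (sub_ne_zero.2 had) (sub_ne_zero.2 hbc))

theorem crossRatio_self_right {a b c : F} (hac : a ≠ c) (hbc : b ≠ c) :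
    crossRatio F a b c c = 1 :=
  div_self (mul_ne_zero (sub_ne_zero.2 hac) (sub_ne_zero.2 hbc))

theorem crossRatio_swap_left (a b c d : F) :
    crossRatio F b a c d = (crossRatio F a b c d)⁻¹ := by
  rw [crossRatio, crossRatio, inv_div, mul_comm (b - c), mul_comm (b - d)]

/-- The class `{x}_2` of `x ∈ F^*` in `B_2(F)`, extended to all of `F` by the junk value `0`
at `x = 0`. -/
def blochClass (x : F) : B2 F :=
  open Classical in
  if h : x = 0 then 0 else QuotientAddGroup.mk (Finsupp.single (Units.mk0 x h) 1)

theorem blochClass_coe (x : Fˣ) :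
    blochClass (x : F) = QuotientAddGroup.mk (Finsupp.single x 1) := by
  simp [blochClass]

theorem blochClass_one : blochClass (1 : F) = 0 := by
  rw [← Units.val_one, blochClass_coe, QuotientAddGroup.eq_zero_iff]
  exact AddSubgroup.subset_closure (Or.inl rfl)

theorem sum_blochClass_crossRatio {z : Fin 5 → F} (hz : Function.Injective z) :
    ∑ i : Fin 5, (-1 : ℤ) ^ ((i : ℕ) + 1) • blochClass (crossRatio F (z (i.succAbove 0))
      (z (i.succAbove 1)) (z (i.succAbove 2)) (z (i.succAbove 3))) = 0 := by
  have hz' (i : Fin 5) {j k : Fin 4} (hjk : j ≠ k) : z (i.succAbove j) ≠ z (i.succAbove k) :=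
    (hz.comp i.succAbove_right_injective).ne hjk
  have hr (i : Fin 5) : crossRatio F (z (i.succAbove 0)) (z (i.succAbove 1))
      (z (i.succAbove 2)) (z (i.succAbove 3)) ≠ 0 :=
    crossRatio_ne_zero (hz' i (by decide)) (hz' i (by decide)) (hz' i (by decide))
      (hz' i (by decide))
  have hmem : ∑ i : Fin 5, (-1 : ℤ) ^ ((i : ℕ) + 1) •
      Finsupp.single (Units.mk0 _ (hr i)) (1 : ℤ) ∈ R2 F :=
    AddSubgroup.subset_closure
      (Or.inr ⟨z, fun i => Units.mk0 _ (hr i), hz, fun _ => rfl, rfl⟩)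
  rw [← (QuotientAddGroup.eq_zero_iff _).2 hmem, ← QuotientAddGroup.mk'_apply, map_sum]
  refine Finset.sum_congr rfl fun i _ => ?_
  rw [map_zsmul, QuotientAddGroup.mk'_apply, ← blochClass_coe, Units.val_mk0]

-- Since `{1}_2 = 0`, the relation survives when the last two points collide.
theorem blochClass_fiveTerm {z : Fin 5 → F} (hz : ∀ i j, i < j → i < 3 → z i ≠ z j) :
    blochClass (crossRatio F (z 1) (z 2) (z 3) (z 4))
      - blochClass (crossRatio F (z 0) (z 2) (z 3) (z 4))
      + blochClass (crossRatio F (z 0) (z 1) (z 3) (z 4))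
      - blochClass (crossRatio F (z 0) (z 1) (z 2) (z 4))
      + blochClass (crossRatio F (z 0) (z 1) (z 2) (z 3)) = 0 := by
  by_cases h34 : z 3 = z 4
  · have h (i : Fin 5) (hi : i < 3) : z i ≠ z 4 := hz i 4 (hi.trans (by decide)) hi
    rw [h34, crossRatio_self_right (h 1 (by decide)) (h 2 (by decide)),
      crossRatio_self_right (h 0 (by decide)) (h 2 (by decide)),
      crossRatio_self_right (h 0 (by decide)) (h 1 (by decide)), blochClass_one]
    abel
  · have hinj : Function.Injective z := by
      intro i j hij
      by_contra hne
      wlog hlt : i < j generalizing i j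
      · exact this hij.symm (Ne.symm hne) (lt_of_le_of_ne (not_lt.1 hlt) (Ne.symm hne))
      by_cases hi : i < 3
      · exact hz i j hlt hi hij
      · obtain ⟨rfl, rfl⟩ : i = 3 ∧ j = 4 := by lia
        exact h34 hij
    have h := sum_blochClass_crossRatio hinj
    rw [Fin.sum_univ_five] at h
    change (-1 : ℤ) ^ 1 • blochClass (crossRatio F (z 1) (z 2) (z 3) (z 4))
      + (-1 : ℤ) ^ 2 • blochClass (crossRatio F (z 0) (z 2) (z 3) (z 4))
      + (-1 : ℤ) ^ 3 • blochClass (crossRatio F (z 0) (z 1) (z 3) (z 4))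
      + (-1 : ℤ) ^ 4 • blochClass (crossRatio F (z 0) (z 1) (z 2) (z 4))
      + (-1 : ℤ) ^ 5 • blochClass (crossRatio F (z 0) (z 1) (z 2) (z 3)) = 0 at h
    rw [← neg_eq_zero, ← h]
    module

-- Adding to the five-term relation the one with its first two points exchanged leaves only
-- pairs of mutually inverse cross-ratios.
theorem blochClass_add_inv_crossRatio {z : Fin 5 → F} (hz : Function.Injective z) :
    blochClass (crossRatio F (z 0) (z 1) (z 2) (z 4))
        + blochClass (crossRatio F (z 0) (z 1) (z 2) (z 4))⁻¹
      = blochClass (crossRatio F (z 0) (z 1) (z 3) (z 4))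
        + blochClass (crossRatio F (z 0) (z 1) (z 3) (z 4))⁻¹
        + (blochClass (crossRatio F (z 0) (z 1) (z 2) (z 3))
          + blochClass (crossRatio F (z 0) (z 1) (z 2) (z 3))⁻¹) := by
  have h := blochClass_fiveTerm fun i j (hij : i < j) _ => hz.ne hij.ne
  have hswap := blochClass_fiveTerm (z := z ∘ Equiv.swap 0 1) fun i j (hij : i < j) _ =>
    (hz.comp (Equiv.injective _)).ne hij.ne
  change blochClass (crossRatio F (z 0) (z 2) (z 3) (z 4))
    - blochClass (crossRatio F (z 1) (z 2) (z 3) (z 4))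
    + blochClass (crossRatio F (z 1) (z 0) (z 3) (z 4))
    - blochClass (crossRatio F (z 1) (z 0) (z 2) (z 4))
    + blochClass (crossRatio F (z 1) (z 0) (z 2) (z 3)) = 0 at hswap
  simp only [← crossRatio_swap_left]
  rw [← sub_eq_zero, ← neg_eq_zero, ← add_zero (0 : B2 F)]
  nth_rewrite 2 [← h]
  rw [← hswap]
  abel

theorem crossRatio_zero_one {m n : F} (hm : 1 + m ≠ 0) (hn : 1 + n ≠ 0) :
    crossRatio F 0 1 (m / (1 + m)) (n / (1 + n)) = m / n := by
  have h (k : F) (hk : 1 + k ≠ 0) : 1 - k / (1 + k) = (1 + k)⁻¹ := by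
    rw [one_sub_div hk, add_sub_cancel_right, one_div]
  rw [crossRatio, h m hm, h n hn, zero_sub, zero_sub, neg_mul, neg_mul, neg_div_neg_eq]
  field_simp

theorem injective_cons_zero_one {m : Fin 3 → F} (hm : Function.Injective m)
    (h0 : ∀ i, m i ≠ 0) (h1 : ∀ i, 1 + m i ≠ 0) :
    Function.Injective (![0, 1, m 0 / (1 + m 0), m 1 / (1 + m 1), m 2 / (1 + m 2)]) := by
  have hcons : ![0, 1, m 0 / (1 + m 0), m 1 / (1 + m 1), m 2 / (1 + m 2)]
      = Fin.cons 0 (Fin.cons 1 fun i => m i / (1 + m i)) := by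
    ext i; fin_cases i <;> rfl
  rw [hcons, Fin.cons_injective_iff, Fin.cons_injective_iff, Set.mem_range, Set.mem_range]
  refine ⟨?_, ?_, fun i j hij => hm ?_⟩
  · rintro ⟨i, hi⟩
    cases i using Fin.cases with
    | zero => exact one_ne_zero hi
    | succ i => exact div_ne_zero (h0 i) (h1 i) hi
  · rintro ⟨i, hi⟩
    rw [div_eq_one_iff_eq (h1 i)] at hi
    simp at hi
  · rw [div_eq_div_iff (h1 i) (h1 j)] at hij
    linear_combination hij

theorem exists_notMem_of_le_enatCard {α : Type*} {n : ℕ} (hn : n ≤ ENat.card α)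
    {s : Finset α} (hs : s.card < n) : ∃ a, a ∉ s := by
  by_contra! h
  rw [← Set.encard_univ, ← Set.eq_univ_of_forall (s := (s : Set α)) h,
    Set.encard_coe_eq_coe_finsetCard, Nat.cast_le] at hn
  exact hs.not_ge hn

theorem blochClass_add_inv_mul (hF : 5 ≤ ENat.card F) {x y : F} (hx : x ≠ 0) (hy : y ≠ 0)
    (hx1 : x ≠ 1) (hy1 : y ≠ 1) (hxy : x * y ≠ 1) :
    blochClass (x * y) + blochClass (x * y)⁻¹
      = blochClass x + blochClass x⁻¹ + (blochClass y + blochClass y⁻¹) := by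
  classical
  obtain ⟨t, ht⟩ := exists_notMem_of_le_enatCard (s := {0, -1, -x⁻¹, -(x * y)⁻¹}) hF
    (Nat.lt_succ_of_le Finset.card_le_four)
  simp only [Finset.mem_insert, Finset.mem_singleton, not_or] at ht
  obtain ⟨ht0, ht1, htx, htxy⟩ := ht
  have h1 : 1 + t ≠ 0 := fun h => ht1 (by linear_combination h)
  have h1x : 1 + t * x ≠ 0 := fun h => htx (by field_simp; linear_combination h)
  have h1xy : 1 + t * (x * y) ≠ 0 := fun h => htxy (by field_simp; linear_combination h)
  have hz := injective_cons_zero_one (m := ![t * (x * y), t * x, t])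
    (by
      intro i j
      fin_cases i <;> fin_cases j <;> simp [*])
    (by simp [Fin.forall_fin_succ, *]) (by simp [Fin.forall_fin_succ, *])
  have h := blochClass_add_inv_crossRatio hz
  change blochClass (crossRatio F 0 1 (t * (x * y) / (1 + t * (x * y))) (t / (1 + t)))
      + blochClass (crossRatio F 0 1 (t * (x * y) / (1 + t * (x * y))) (t / (1 + t)))⁻¹
    = blochClass (crossRatio F 0 1 (t * x / (1 + t * x)) (t / (1 + t)))
      + blochClass (crossRatio F 0 1 (t * x / (1 + t * x)) (t / (1 + t)))⁻¹
      + (blochClass (crossRatio F 0 1 (t * (x * y) / (1 + t * (x * y))) (t * x / (1 + t * x)))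
      + blochClass (crossRatio F 0 1 (t * (x * y) / (1 + t * (x * y))) (t * x / (1 + t * x)))⁻¹)
    at h
  rwa [crossRatio_zero_one h1xy h1, crossRatio_zero_one h1x h1, crossRatio_zero_one h1xy h1x,
    mul_div_cancel_left₀ _ ht0, mul_div_cancel_left₀ _ ht0, mul_div_mul_left _ _ ht0,
    mul_div_cancel_left₀ _ hx] at h

theorem two_nsmul_blochClass_add_inv (hF : 5 ≤ ENat.card F) {x : F} (hx : x ≠ 0) :
    2 • (blochClass x + blochClass x⁻¹) = 0 := by
  classical
  by_cases hx1 : x = 1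
  · rw [hx1, inv_one, blochClass_one, add_zero, nsmul_zero]
  obtain ⟨z, hz⟩ := exists_notMem_of_le_enatCard (s := {0, 1, x⁻¹}) hF
    (Finset.card_le_three.trans_lt (by norm_num))
  simp only [Finset.mem_insert, Finset.mem_singleton, not_or] at hz
  obtain ⟨hz0, hz1, hzx⟩ := hz
  have hzx1 : z * x ≠ 1 := fun h => hzx (eq_inv_of_mul_eq_one_left h)
  have hmul := blochClass_add_inv_mul hF hz0 hx hz1 hx1 hzx1
  have hdiv := blochClass_add_inv_mul hF (mul_ne_zero hz0 hx) (inv_ne_zero hx) hzx1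
    (inv_ne_one.2 hx1) (by rwa [mul_inv_cancel_right₀ hx])
  rw [mul_inv_cancel_right₀ hx, inv_inv, hmul, add_assoc, left_eq_add] at hdiv
  rw [← hdiv]
  abel

end BlochGroup

section Projection

variable {F}

theorem det3_eq (a b c : Fin 3 → F) :
    det3 F a b c = a 0 * (b 1 * c 2 - b 2 * c 1) - a 1 * (b 0 * c 2 - b 2 * c 0)
      + a 2 * (b 0 * c 1 - b 1 * c 0) := by
  rw [det3, Matrix.det_fin_three]
  simp only [Matrix.of_apply, Matrix.cons_val]
  ring

theorem det3_swap_left (a b c : Fin 3 → F) : det3 F b a c = -det3 F a b c := by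
  simp only [det3_eq]
  ring

theorem det3_swap_right (a b c : Fin 3 → F) : det3 F a c b = -det3 F a b c := by
  simp only [det3_eq]
  ring

theorem det3_neg_right (a b c : Fin 3 → F) : det3 F a b (-c) = -det3 F a b c := by
  simp only [det3_eq, Pi.neg_apply]
  ring

theorem det3_plucker (l a b c d : Fin 3 → F) :
    det3 F l a c * det3 F l b d - det3 F l a d * det3 F l b c
      = det3 F l a b * det3 F l c d := by
  simp only [det3_eq]
  ring

/-- The cross-ratio of the images of `a, b, c, d` under the projection from `l` of the projective
plane to the projective line. -/
def projCrossRatio (l a b c d : Fin 3 → F) : F :=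
  (det3 F l a c * det3 F l b d) / (det3 F l a d * det3 F l b c)

theorem projCrossRatio_swap_left (l a b c d : Fin 3 → F) :
    projCrossRatio l b a c d = (projCrossRatio l a b c d)⁻¹ := by
  rw [projCrossRatio, projCrossRatio, inv_div, mul_comm (det3 F l b c), mul_comm (det3 F l b d)]

theorem projCrossRatio_neg_third (l a b c d : Fin 3 → F) :
    projCrossRatio l a b (-c) d = projCrossRatio l a b c d := by
  simp only [projCrossRatio, det3_neg_right, neg_mul, mul_neg, neg_div_neg_eq]

/-- The affine coordinate of the image of `v` under the projection from `l`, normalised so that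
the image of `f` is `0` and the image of `e` is `∞`. -/
def projCoord (l e f v : Fin 3 → F) : F := det3 F l v f / det3 F l v e

theorem projCoord_sub {l e a b : Fin 3 → F} (f : Fin 3 → F) (ha : det3 F l a e ≠ 0)
    (hb : det3 F l b e ≠ 0) : projCoord l e f a - projCoord l e f b
      = det3 F l a b * det3 F l f e / (det3 F l a e * det3 F l b e) := by
  rw [projCoord, projCoord, div_sub_div _ _ ha hb, det3_plucker]

theorem projCoord_ne {l e f a b : Fin 3 → F} (hf : det3 F l f e ≠ 0) (ha : det3 F l a e ≠ 0)
    (hb : det3 F l b e ≠ 0) (hab : det3 F l a b ≠ 0) :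
    projCoord l e f a ≠ projCoord l e f b := by
  rw [← sub_ne_zero, projCoord_sub f ha hb]
  exact div_ne_zero (mul_ne_zero hab hf) (mul_ne_zero ha hb)

theorem crossRatio_projCoord {l e f a b c d : Fin 3 → F} (hf : det3 F l f e ≠ 0)
    (ha : det3 F l a e ≠ 0) (hb : det3 F l b e ≠ 0) (hc : det3 F l c e ≠ 0)
    (hd : det3 F l d e ≠ 0) :
    crossRatio F (projCoord l e f a) (projCoord l e f b) (projCoord l e f c) (projCoord l e f d)
      = projCrossRatio l a b c d := by
  rw [crossRatio, projCoord_sub f ha hc, projCoord_sub f hb hd, projCoord_sub f ha hd,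
    projCoord_sub f hb hc, projCrossRatio]
  field_simp

theorem blochClass_projCrossRatio_fiveTerm {l e : Fin 3 → F} {v : Fin 5 → Fin 3 → F}
    (he : ∀ i, det3 F l (v i) e ≠ 0) (hv : ∀ i j, i < j → i < 3 → det3 F l (v i) (v j) ≠ 0) :
    blochClass (projCrossRatio l (v 1) (v 2) (v 3) (v 4))
      - blochClass (projCrossRatio l (v 0) (v 2) (v 3) (v 4))
      + blochClass (projCrossRatio l (v 0) (v 1) (v 3) (v 4))
      - blochClass (projCrossRatio l (v 0) (v 1) (v 2) (v 4))
      + blochClass (projCrossRatio l (v 0) (v 1) (v 2) (v 3)) = 0 := by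
  have h := blochClass_fiveTerm (z := fun i => projCoord l e (v 0) (v i))
    fun i j hij hi => projCoord_ne (he 0) (he i) (he j) (hv i j hij hi)
  simpa only [crossRatio_projCoord (he 0) (he _) (he _) (he _) (he _)] using h

/-- The intersection point of the lines `ab` and `cd` of the projective plane. -/
def meet (a b c d : Fin 3 → F) : Fin 3 → F := det3 F a c d • b - det3 F b c d • a

theorem meet_swap_left (a b c d : Fin 3 → F) : meet b a c d = -meet a b c d := by
  rw [meet, meet, neg_sub]

theorem meet_swap_right (a b c d : Fin 3 → F) : meet a b d c = -meet a b c d := by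
  rw [meet, meet, det3_swap_right a, det3_swap_right b]
  module

theorem det3_meet_first (l a b c d : Fin 3 → F) :
    det3 F l a (meet a b c d) = det3 F a c d * det3 F l a b := by
  simp only [meet, det3_eq, Pi.sub_apply, Pi.smul_apply, smul_eq_mul]
  ring

theorem det3_meet_second (l a b c d : Fin 3 → F) :
    det3 F l b (meet a b c d) = det3 F b c d * det3 F l a b := by
  simp only [meet, det3_eq, Pi.sub_apply, Pi.smul_apply, smul_eq_mul]
  ring

theorem det3_meet_third (l a b c d : Fin 3 → F) :
    det3 F l c (meet a b c d) = det3 F a b c * det3 F l d c := by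
  simp only [meet, det3_eq, Pi.sub_apply, Pi.smul_apply, smul_eq_mul]
  ring

theorem det3_meet_fourth (l a b c d : Fin 3 → F) :
    det3 F l d (meet a b c d) = det3 F a b d * det3 F l d c := by
  simp only [meet, det3_eq, Pi.sub_apply, Pi.smul_apply, smul_eq_mul]
  ring

end Projection

section Alternation

variable {ι α W : Type*} [Fintype ι] [DecidableEq ι] [AddCommGroup W]

/-- The alternation `Σ_σ sgn(σ) f(x ∘ σ)` of a function `f` of a family `x`, over all permutations
`σ` of the index set of `x`. -/
def altSum (x : ι → α) : ((ι → α) → W) →+ W where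
  toFun f := ∑ σ : Equiv.Perm ι, (Equiv.Perm.sign σ : ℤ) • f (x ∘ σ)
  map_zero' := by simp
  map_add' f g := by simp [Finset.sum_add_distrib]

theorem altSum_apply (x : ι → α) (f : (ι → α) → W) :
    altSum x f = ∑ σ : Equiv.Perm ι, (Equiv.Perm.sign σ : ℤ) • f (x ∘ σ) :=
  rfl

theorem altSum_congr {x : ι → α} {f g : (ι → α) → W}
    (h : ∀ σ : Equiv.Perm ι, f (x ∘ σ) = g (x ∘ σ)) : altSum x f = altSum x g := by
  simp only [altSum_apply, h]

theorem altSum_comp_perm (x : ι → α) (f : (ι → α) → W) (τ : Equiv.Perm ι) :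
    altSum x (fun y => f (y ∘ τ)) = (Equiv.Perm.sign τ : ℤ) • altSum x f := by
  rw [altSum_apply, altSum_apply, Finset.smul_sum]
  refine Fintype.sum_equiv (Equiv.mulRight τ) _ _ fun σ => ?_
  rw [Equiv.coe_mulRight, Equiv.Perm.coe_mul, ← Function.comp_assoc, smul_smul,
    Equiv.Perm.sign_mul, mul_comm (Equiv.Perm.sign σ), Units.val_mul, ← mul_assoc,
    ← Units.val_mul, Int.units_mul_self, Units.val_one, one_mul]

theorem altSum_comp_swap {i j : ι} (hij : i ≠ j) (x : ι → α) (f : (ι → α) → W) :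
    altSum x (fun y => f (y ∘ Equiv.swap i j)) = -altSum x f := by
  rw [altSum_comp_perm, Equiv.Perm.sign_swap hij, Units.val_neg, Units.val_one, neg_one_zsmul]

theorem eq_zero_of_eq_neg_of_isSMulRegular (hW : IsSMulRegular W 2) {w : W} (hw : w = -w) :
    w = 0 := by
  refine hW.right_eq_zero_of_smul ?_
  rw [two_nsmul]
  exact eq_neg_iff_add_eq_zero.1 hw

theorem altSum_eq_zero_of_swap (hW : IsSMulRegular W 2) {i j : ι} (hij : i ≠ j) (x : ι → α)
    {f : (ι → α) → W} (hf : ∀ y, f (y ∘ Equiv.swap i j) = f y) : altSum x f = 0 := by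
  have h := altSum_comp_swap hij x f
  simp only [hf] at h
  exact eq_zero_of_eq_neg_of_isSMulRegular hW h

theorem cycleRange_inv_mul_decomposeFin_injective (n : ℕ) :
    Function.Injective fun p : Fin (n + 1) × Equiv.Perm (Fin n) =>
      p.1.cycleRange⁻¹ * Equiv.Perm.decomposeFin.symm (0, p.2) := by
  rintro ⟨i, σ⟩ ⟨j, τ⟩ h
  obtain rfl : i = j := by
    simpa [Equiv.Perm.inv_def] using congrArg (fun ρ : Equiv.Perm (Fin (n + 1)) => ρ 0) h
  simpa using mul_left_cancel h

theorem sum_succAbove_eq_altSum_succ {n : ℕ} (x : Fin (n + 1) → α) (f : (Fin n → α) → W) :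
    ∑ i : Fin (n + 1), (-1 : ℤ) ^ (i : ℕ) •
        ∑ σ : Equiv.Perm (Fin n), (Equiv.Perm.sign σ : ℤ) • f (fun j => x (i.succAbove (σ j)))
      = altSum x fun y => f (y ∘ Fin.succ) := by
  simp only [Finset.smul_sum]
  rw [← Fintype.sum_prod_type', altSum_apply]
  refine Fintype.sum_bijective _ ((Fintype.bijective_iff_injective_and_card _).2
    ⟨cycleRange_inv_mul_decomposeFin_injective n, ?_⟩) _ _ ?_
  · simp [Fintype.card_perm, Nat.factorial_succ]
  · rintro ⟨i, σ⟩
    have hsucc : (i.cycleRange⁻¹ * Equiv.Perm.decomposeFin.symm (0, σ)) ∘ Fin.succ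
        = i.succAbove ∘ σ := by
      ext j
      simp [Equiv.Perm.inv_def]
    have hsign : (Equiv.Perm.sign (i.cycleRange⁻¹ * Equiv.Perm.decomposeFin.symm (0, σ)) : ℤ)
        = (-1) ^ (i : ℕ) * (Equiv.Perm.sign σ : ℤ) := by
      simp [Equiv.Perm.sign_mul, Fin.sign_cycleRange]
    rw [Function.comp_assoc, hsucc, hsign, smul_smul]
    rfl

theorem altSum_comp_succ {n : ℕ} (x : Fin (n + 1) → α) (f : (Fin n → α) → W) :
    altSum x (fun y => f (y ∘ Fin.succ))
      = (-1 : ℤ) ^ n • altSum x fun y => f (y ∘ Fin.castSucc) := by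
  have hrot : (finRotate (n + 1)) ∘ Fin.castSucc = (Fin.succ : Fin n → Fin (n + 1)) := by
    ext j
    simp
  simpa [Function.comp_assoc, hrot] using
    altSum_comp_perm x (fun y => f (y ∘ Fin.castSucc)) (finRotate (n + 1))

end Alternation

section GeneralPosition

variable {F}

/-- The family `y` of vectors of `F³` is in general position, any three of its members being
linearly independent. -/
def InGeneralPosition {ι : Type*} (y : ι → Fin 3 → F) : Prop :=
  ∀ i j k, [i, j, k].Nodup → det3 F (y i) (y j) (y k) ≠ 0

theorem InGeneralPosition.comp {ι κ : Type*} {y : ι → Fin 3 → F} (hy : InGeneralPosition y)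
    {f : κ → ι} (hf : Function.Injective f) : InGeneralPosition (y ∘ f) :=
  fun i j k h => hy (f i) (f j) (f k) (h.map hf)

theorem inGeneralPosition_of_linearIndependent {ι : Type*} {y : ι → Fin 3 → F}
    (hy : ∀ s : Finset ι, s.card = 3 → LinearIndependent F (fun i : s => y i)) :
    InGeneralPosition y := by
  classical
  intro i j k h
  have hinj : Function.Injective ![i, j, k] := List.nodup_ofFn.1 (by simpa using h)
  have hs := hy (Finset.univ.map ⟨_, hinj⟩) (by simp)
  have hli := hs.comp (fun a => ⟨![i, j, k] a, by simp⟩)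
    fun a b hab => hinj (congrArg Subtype.val hab)
  have hrow : (Matrix.of ![y i, y j, y k]).row = fun a => y (![i, j, k] a) := by
    ext a
    fin_cases a <;> rfl
  exact ((Matrix.isUnit_iff_isUnit_det _).1
    (Matrix.linearIndependent_rows_iff_isUnit.1 (hrow ▸ hli))).ne_zero

theorem InGeneralPosition.five_le_enatCard {y : Fin 7 → Fin 3 → F} (hy : InGeneralPosition y) :
    5 ≤ ENat.card F := by
  have hv (i : Fin 5) : [0, i.castSucc.succ, (6 : Fin 7)].Nodup := by decide +revert
  have hvv {i j : Fin 5} (hij : i ≠ j) : [0, i.castSucc.succ, j.castSucc.succ].Nodup := by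
    decide +revert
  have hinj : Function.Injective fun i : Fin 5 =>
      projCoord (y 0) (y 6) (y 1) (y i.castSucc.succ) := fun i j h => by
    contrapose! h
    exact projCoord_ne (hy 0 1 6 (by decide)) (hy _ _ _ (hv i)) (hy _ _ _ (hv j))
      (hy _ _ _ (hvv h))
  simpa using ENat.card_le_card_of_injective hinj

end GeneralPosition

section Pairing

variable {F} {W : Type*} [AddCommGroup W]

/-- The map `b ↦ φ (b ⊗ u)` for `u ∈ F^*`, extended to all of `F` by the junk value `0` at
`u = 0`. -/
def pairing (φ : B2 F ⊗[ℤ] Additive Fˣ →+ W) (u : F) : B2 F →+ W :=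
  open Classical in
  if h : u = 0 then 0
  else φ.comp ((TensorProduct.mk ℤ (B2 F) (Additive Fˣ)).flip
    (Additive.ofMul (Units.mk0 u h))).toAddMonoidHom

variable (φ : B2 F ⊗[ℤ] Additive Fˣ →+ W)

theorem pairing_coe (u : Fˣ) (b : B2 F) : pairing φ (u : F) b = φ (b ⊗ₜ Additive.ofMul u) := by
  simp [pairing]

theorem apply_deltaBS_single (u : Fˣ) :
    φ (deltaBS F (Finsupp.single u 1)) = pairing φ (u : F) (blochClass (u : F)) := by
  rw [pairing_coe, blochClass_coe]
  simp [deltaBS]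

theorem pairing_mul {u v : F} (hu : u ≠ 0) (hv : v ≠ 0) :
    pairing φ (u * v) = pairing φ u + pairing φ v := by
  refine AddMonoidHom.ext fun b => ?_
  lift u to Fˣ using hu.isUnit
  lift v to Fˣ using hv.isUnit
  rw [AddMonoidHom.add_apply, ← Units.val_mul, pairing_coe, pairing_coe, pairing_coe, ofMul_mul,
    TensorProduct.tmul_add, map_add]

theorem pairing_div {u v : F} (hu : u ≠ 0) (hv : v ≠ 0) :
    pairing φ (u / v) = pairing φ u - pairing φ v := by
  rw [eq_sub_iff_add_eq, ← pairing_mul φ (div_ne_zero hu hv) hv, div_mul_cancel₀ _ hv]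

variable {φ}

theorem pairing_neg (hW : IsSMulRegular W 2) {u : F} (hu : u ≠ 0) (b : B2 F) :
    pairing φ (-u) b = pairing φ u b := by
  refine hW ?_
  have hsq : pairing φ (-u) + pairing φ (-u) = pairing φ u + pairing φ u := by
    rw [← pairing_mul φ (neg_ne_zero.2 hu) (neg_ne_zero.2 hu), neg_mul_neg, pairing_mul φ hu hu]
  simpa only [two_nsmul, AddMonoidHom.add_apply] using DFunLike.congr_fun hsq b

theorem pairing_blochClass_inv (hW : IsSMulRegular W 2) (hF : 5 ≤ ENat.card F) (u : F) {x : F}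
    (hx : x ≠ 0) : pairing φ u (blochClass x⁻¹) = -pairing φ u (blochClass x) := by
  refine eq_neg_of_add_eq_zero_right (hW.right_eq_zero_of_smul ?_)
  rw [← map_add, ← map_nsmul, two_nsmul_blochClass_add_inv hF hx, map_zero]

end Pairing

section TripleRatio

variable {F}

/-- The generalized cross-ratio `ρ(y_0,…,y_5)` of the first six of seven vectors. Keeping the
unused seventh vector makes permutations involving it available under alternation. -/
def rho (y : Fin 7 → Fin 3 → F) : F := tripleRatio F (y ∘ Fin.castSucc)

theorem rho_eq (y : Fin 7 → Fin 3 → F) : rho y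
    = (det3 F (y 0) (y 1) (y 3) * det3 F (y 1) (y 2) (y 4) * det3 F (y 2) (y 0) (y 5)) /
      (det3 F (y 0) (y 1) (y 4) * det3 F (y 1) (y 2) (y 5) * det3 F (y 2) (y 0) (y 3)) :=
  rfl

theorem rho_ne_zero {y : Fin 7 → Fin 3 → F} (hy : InGeneralPosition y) : rho y ≠ 0 :=
  div_ne_zero
    (mul_ne_zero (mul_ne_zero (hy 0 1 3 (by decide)) (hy 1 2 4 (by decide)))
      (hy 2 0 5 (by decide)))
    (mul_ne_zero (mul_ne_zero (hy 0 1 4 (by decide)) (hy 1 2 5 (by decide)))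
      (hy 2 0 3 (by decide)))

/-- The index permutation `(0 1 2)(3 4 5)`, which preserves `ρ`. -/
def tripleCycle : Equiv.Perm (Fin 7) :=
  Equiv.swap 0 1 * Equiv.swap 1 2 * (Equiv.swap 3 4 * Equiv.swap 4 5)

/-- The index permutation `(0 1)(3 4)`, which inverts `ρ`. -/
def tripleFlip : Equiv.Perm (Fin 7) := Equiv.swap 0 1 * Equiv.swap 3 4

theorem rho_comp_tripleCycle (y : Fin 7 → Fin 3 → F) : rho (y ∘ tripleCycle) = rho y := by
  simp only [rho_eq, Function.comp_apply, show tripleCycle 0 = 1 by decide,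
    show tripleCycle 1 = 2 by decide, show tripleCycle 2 = 0 by decide,
    show tripleCycle 3 = 4 by decide, show tripleCycle 4 = 5 by decide,
    show tripleCycle 5 = 3 by decide]
  congr 1 <;> ring

theorem rho_comp_tripleFlip (y : Fin 7 → Fin 3 → F) : rho (y ∘ tripleFlip) = (rho y)⁻¹ := by
  simp only [rho_eq, Function.comp_apply, show tripleFlip 0 = 1 by decide,
    show tripleFlip 1 = 0 by decide, show tripleFlip 2 = 2 by decide,
    show tripleFlip 3 = 4 by decide, show tripleFlip 4 = 3 by decide,
    show tripleFlip 5 = 5 by decide, inv_div]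
  rw [det3_swap_left (y 0) (y 1), det3_swap_left (y 0) (y 1), det3_swap_left (y 1) (y 2),
    det3_swap_left (y 1) (y 2), det3_swap_left (y 2) (y 0), det3_swap_left (y 2) (y 0),
    ← neg_div_neg_eq]
  congr 1 <;> ring

/-- The intersection point `p` of the lines `y_0y_3` and `y_2y_5`: projected from `y_1`, the
vectors `y_0, y_2, p, y_4` have cross-ratio `ρ(y_0,…,y_5)`. -/
def diagonalPoint (y : Fin 7 → Fin 3 → F) : Fin 3 → F := meet (y 0) (y 3) (y 2) (y 5)

theorem projCrossRatio_diagonalPoint (y : Fin 7 → Fin 3 → F) :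
    projCrossRatio (y 1) (y 0) (y 2) (diagonalPoint y) (y 4) = rho y := by
  rw [projCrossRatio, diagonalPoint, det3_meet_first, det3_meet_third, rho_eq,
    det3_swap_left (y 2) (y 0) (y 5), det3_swap_left (y 0) (y 1) (y 3),
    det3_swap_left (y 0) (y 1) (y 4), det3_swap_right (y 0) (y 2) (y 3),
    det3_swap_left (y 2) (y 0) (y 3), det3_swap_right (y 1) (y 2) (y 5)]
  congr 1 <;> ring

theorem projCrossRatio_diagonalPoint_comp_swap (y : Fin 7 → Fin 3 → F) :
    projCrossRatio (y 1) (y 2) (y 0) (diagonalPoint (y ∘ Equiv.swap 0 3)) (y 4) = (rho y)⁻¹ := by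
  have hswap : diagonalPoint (y ∘ Equiv.swap 0 3) = -diagonalPoint y := meet_swap_left _ _ _ _
  rw [hswap, projCrossRatio_neg_third, projCrossRatio_swap_left, projCrossRatio_diagonalPoint]

theorem blochClass_rho_eq {y : Fin 7 → Fin 3 → F} (hy : InGeneralPosition y) :
    blochClass (rho y) =
      blochClass (projCrossRatio (y 1) (y 0) (y 3) (diagonalPoint y) (y 4))
        + blochClass (projCrossRatio (y 1) (y 0) (y 2) (y 3) (y 4))
        - blochClass (projCrossRatio (y 1) (y 0) (y 2) (y 3) (diagonalPoint y))
        - blochClass (projCrossRatio (y 1) (y 2) (y 3) (diagonalPoint y) (y 4)) := by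
  have h0 : det3 F (y 1) (y 0) (diagonalPoint y) ≠ 0 := by
    rw [diagonalPoint, det3_meet_first]
    exact mul_ne_zero (hy 0 2 5 (by decide)) (hy 1 0 3 (by decide))
  have h2 : det3 F (y 1) (y 2) (diagonalPoint y) ≠ 0 := by
    rw [diagonalPoint, det3_meet_third]
    exact mul_ne_zero (hy 0 3 2 (by decide)) (hy 1 5 2 (by decide))
  have h3 : det3 F (y 1) (y 3) (diagonalPoint y) ≠ 0 := by
    rw [diagonalPoint, det3_meet_second]
    exact mul_ne_zero (hy 3 2 5 (by decide)) (hy 1 0 3 (by decide))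
  have h5 : det3 F (y 1) (diagonalPoint y) (y 5) ≠ 0 := by
    rw [det3_swap_right, diagonalPoint, det3_meet_fourth]
    exact neg_ne_zero.2 (mul_ne_zero (hy 0 3 5 (by decide)) (hy 1 5 2 (by decide)))
  have hfive := blochClass_projCrossRatio_fiveTerm (l := y 1) (e := y 5)
    (v := ![y 0, y 2, y 3, diagonalPoint y, y 4])
    (by
      simpa [Fin.forall_fin_succ] using
        ⟨hy 1 0 5 (by decide), hy 1 2 5 (by decide), hy 1 3 5 (by decide), h5,
          hy 1 4 5 (by decide)⟩)
    (by
      simpa [Fin.forall_fin_succ] using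
        ⟨⟨hy 1 0 2 (by decide), hy 1 0 3 (by decide), h0, hy 1 0 4 (by decide)⟩,
          ⟨hy 1 2 3 (by decide), h2, hy 1 2 4 (by decide)⟩, h3, hy 1 3 4 (by decide)⟩)
  simp only [Matrix.cons_val, projCrossRatio_diagonalPoint] at hfive
  rw [← sub_eq_zero, ← hfive]
  abel

end TripleRatio

section Vanishing

variable {F} {W : Type*} [AddCommGroup W]

theorem altSum_pairing_det3_blochClass_projCrossRatio (hW : IsSMulRegular W 2)
    (φ : B2 F ⊗[ℤ] Additive Fˣ →+ W) {x : Fin 7 → Fin 3 → F} (hx : InGeneralPosition x) :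
    altSum x (fun y => pairing φ (det3 F (y 0) (y 1) (y 3))
        (blochClass (projCrossRatio (y 1) (y 2) (y 3) (diagonalPoint y) (y 4))))
      = altSum x fun y => pairing φ (det3 F (y 0) (y 1) (y 3)) (blochClass (rho y)) := by
  rw [← neg_inj, ← altSum_comp_swap (show (0 : Fin 7) ≠ 3 by decide), ← map_neg]
  refine altSum_congr fun σ => ?_
  have hy := hx.comp σ.injective
  generalize x ∘ σ = y at hy ⊢
  have hdet : det3 F (y 3) (y 1) (y 0) = -det3 F (y 0) (y 1) (y 3) := by
    rw [det3_swap_left, det3_swap_right, det3_swap_left, neg_neg]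
  change pairing φ (det3 F (y 3) (y 1) (y 0)) (blochClass (projCrossRatio (y 1) (y 2) (y 0)
    (diagonalPoint (y ∘ Equiv.swap 0 3)) (y 4))) = -_
  rw [projCrossRatio_diagonalPoint_comp_swap, hdet, pairing_neg hW (hy 0 1 3 (by decide)),
    pairing_blochClass_inv hW hx.five_le_enatCard _ (rho_ne_zero hy)]

theorem altSum_pairing_det3_blochClass_rho_eq_zero (hW : IsSMulRegular W 2)
    (φ : B2 F ⊗[ℤ] Additive Fˣ →+ W) {x : Fin 7 → Fin 3 → F} (hx : InGeneralPosition x) :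
    altSum x (fun y => pairing φ (det3 F (y 0) (y 1) (y 3)) (blochClass (rho y))) = 0 := by
  let A (g : (Fin 7 → Fin 3 → F) → F) : W :=
    altSum x fun y => pairing φ (det3 F (y 0) (y 1) (y 3)) (blochClass (g y))
  have h25 : A (fun y => projCrossRatio (y 1) (y 0) (y 3) (diagonalPoint y) (y 4)) = 0 :=
    altSum_eq_zero_of_swap hW (i := 2) (j := 5) (by decide) x fun y => by
      simp [diagonalPoint, Equiv.swap_apply_def, meet_swap_right (y 0) (y 3) (y 2),
        projCrossRatio_neg_third]
  have h56 : A (fun y => projCrossRatio (y 1) (y 0) (y 2) (y 3) (y 4)) = 0 :=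
    altSum_eq_zero_of_swap hW (i := 5) (j := 6) (by decide) x fun y => by
      simp [Equiv.swap_apply_def]
  have h46 : A (fun y => projCrossRatio (y 1) (y 0) (y 2) (y 3) (diagonalPoint y)) = 0 :=
    altSum_eq_zero_of_swap hW (i := 4) (j := 6) (by decide) x fun y => by
      simp [diagonalPoint, Equiv.swap_apply_def]
  have h03 : A (fun y => projCrossRatio (y 1) (y 2) (y 3) (diagonalPoint y) (y 4)) = A rho :=
    altSum_pairing_det3_blochClass_projCrossRatio hW φ hx
  have hfive : A rho = A (fun y => projCrossRatio (y 1) (y 0) (y 3) (diagonalPoint y) (y 4))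
      + A (fun y => projCrossRatio (y 1) (y 0) (y 2) (y 3) (y 4))
      - A (fun y => projCrossRatio (y 1) (y 0) (y 2) (y 3) (diagonalPoint y))
      - A (fun y => projCrossRatio (y 1) (y 2) (y 3) (diagonalPoint y) (y 4)) := by
    rw [← map_add, ← map_sub, ← map_sub]
    refine altSum_congr fun σ => ?_
    simp only [Pi.add_apply, Pi.sub_apply, ← map_add, ← map_sub,
      ← blochClass_rho_eq (hx.comp σ.injective)]
  rw [h25, h56, h46, h03, add_zero, sub_zero, zero_sub] at hfive
  exact eq_zero_of_eq_neg_of_isSMulRegular hW hfive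

theorem altSum_pairing_comp_tripleCycle_eq_zero (φ : B2 F ⊗[ℤ] Additive Fˣ →+ W)
    {x : Fin 7 → Fin 3 → F} {d : (Fin 7 → Fin 3 → F) → F}
    (hd : altSum x (fun y => pairing φ (d y) (blochClass (rho y))) = 0) :
    altSum x (fun y => pairing φ (d (y ∘ tripleCycle)) (blochClass (rho y))) = 0 := by
  have h := altSum_comp_perm x (fun y => pairing φ (d y) (blochClass (rho y))) tripleCycle
  simpa only [hd, smul_zero, rho_comp_tripleCycle] using h

theorem altSum_pairing_comp_tripleFlip_eq_zero (hW : IsSMulRegular W 2)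
    (φ : B2 F ⊗[ℤ] Additive Fˣ →+ W)
    {x : Fin 7 → Fin 3 → F} (hx : InGeneralPosition x) {d : (Fin 7 → Fin 3 → F) → F}
    (hd : altSum x (fun y => pairing φ (d y) (blochClass (rho y))) = 0) :
    altSum x (fun y => pairing φ (d (y ∘ tripleFlip)) (blochClass (rho y))) = 0 := by
  rw [← neg_inj, neg_zero, ← map_neg, ← smul_zero (Equiv.Perm.sign tripleFlip : ℤ), ← hd,
    ← altSum_comp_perm]
  refine altSum_congr fun σ => ?_
  have hy := hx.comp σ.injective
  simp only [Pi.neg_apply, rho_comp_tripleFlip,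
    pairing_blochClass_inv hW hx.five_le_enatCard _ (rho_ne_zero hy)]

theorem pairing_rho (hW : IsSMulRegular W 2) (φ : B2 F ⊗[ℤ] Additive Fˣ →+ W)
    {y : Fin 7 → Fin 3 → F} (hy : InGeneralPosition y) (b : B2 F) :
    pairing φ (rho y) b =
      pairing φ (det3 F (y 0) (y 1) (y 3)) b + pairing φ (det3 F (y 1) (y 2) (y 4)) b
        + pairing φ (det3 F (y 2) (y 0) (y 5)) b
        - (pairing φ (det3 F (y 1) (y 0) (y 4)) b + pairing φ (det3 F (y 2) (y 1) (y 5)) b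
          + pairing φ (det3 F (y 0) (y 2) (y 3)) b) := by
  have hneg : -rho y =
      (det3 F (y 0) (y 1) (y 3) * det3 F (y 1) (y 2) (y 4) * det3 F (y 2) (y 0) (y 5)) /
        (det3 F (y 1) (y 0) (y 4) * det3 F (y 2) (y 1) (y 5) * det3 F (y 0) (y 2) (y 3)) := by
    rw [rho_eq, ← div_neg, det3_swap_left (y 0) (y 1) (y 4), det3_swap_left (y 1) (y 2) (y 5),
      det3_swap_left (y 2) (y 0) (y 3)]
    congr 1
    ring
  have h013 := hy 0 1 3 (by decide)
  have h124 := hy 1 2 4 (by decide)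
  have h205 := hy 2 0 5 (by decide)
  have h104 := hy 1 0 4 (by decide)
  have h215 := hy 2 1 5 (by decide)
  have h023 := hy 0 2 3 (by decide)
  rw [← pairing_neg hW (rho_ne_zero hy), hneg,
    pairing_div φ (mul_ne_zero (mul_ne_zero h013 h124) h205)
      (mul_ne_zero (mul_ne_zero h104 h215) h023),
    pairing_mul φ (mul_ne_zero h013 h124) h205, pairing_mul φ h013 h124,
    pairing_mul φ (mul_ne_zero h104 h215) h023, pairing_mul φ h104 h215]
  rfl

theorem altSum_pairing_rho_blochClass_rho_eq_zero (hW : IsSMulRegular W 2)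
    (φ : B2 F ⊗[ℤ] Additive Fˣ →+ W) {x : Fin 7 → Fin 3 → F} (hx : InGeneralPosition x) :
    altSum x (fun y => pairing φ (rho y) (blochClass (rho y))) = 0 := by
  let A (i j k : Fin 7) : W :=
    altSum x fun y => pairing φ (det3 F (y i) (y j) (y k)) (blochClass (rho y))
  have h013 : A 0 1 3 = 0 := altSum_pairing_det3_blochClass_rho_eq_zero hW φ hx
  have h124 : A 1 2 4 = 0 := altSum_pairing_comp_tripleCycle_eq_zero φ h013
  have h205 : A 2 0 5 = 0 := altSum_pairing_comp_tripleCycle_eq_zero φ h124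
  have h104 : A 1 0 4 = 0 := altSum_pairing_comp_tripleFlip_eq_zero hW φ hx h013
  have h215 : A 2 1 5 = 0 := altSum_pairing_comp_tripleCycle_eq_zero φ h104
  have h023 : A 0 2 3 = 0 := altSum_pairing_comp_tripleCycle_eq_zero φ h215
  calc
    _ = A 0 1 3 + A 1 2 4 + A 2 0 5 - (A 1 0 4 + A 2 1 5 + A 0 2 3) := by
      simp only [A, ← map_add, ← map_sub]
      exact altSum_congr fun σ => pairing_rho hW φ (hx.comp σ.injective) _
    _ = 0 := by
      rw [h013, h124, h205, h104, h215, h023]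
      simp only [add_zero, sub_zero]

end Vanishing

theorem isSMulRegular_two_tensor_rat (M : Type*) [AddCommGroup M] :
    IsSMulRegular (M ⊗[ℤ] ℚ) 2 := by
  have : IsAddTorsionFree (ℚ ⊗[ℤ] M) := IsAddTorsionFree.of_module_rat _
  refine fun a b hab => (TensorProduct.comm ℤ M ℚ).injective
    (nsmul_right_injective two_ne_zero ?_)
  simpa using congrArg (TensorProduct.comm ℤ M ℚ) hab

variable {F} in
theorem statement_7_general {W : Type*} [AddCommGroup W] (hW : IsSMulRegular W 2)
    (φ : B2 F ⊗[ℤ] Additive Fˣ →+ W) (x : Fin 7 → Fin 3 → F)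
    (hgen : ∀ s : Finset (Fin 7), s.card = 3 →
      LinearIndependent F (fun i : s => x i))
    (ru : Fin 7 → Equiv.Perm (Fin 6) → Fˣ)
    (hru : ∀ (i : Fin 7) (σ : Equiv.Perm (Fin 6)),
      (ru i σ : F) = tripleRatio F (fun j => x (i.succAbove (σ j)))) :
    φ (deltaBS F (∑ i : Fin 7, (-1 : ℤ) ^ ((i : ℕ) + 1) •
      ∑ σ : Equiv.Perm (Fin 6),
        ((Equiv.Perm.sign σ : ℤˣ) : ℤ) • Finsupp.single (ru i σ) (1 : ℤ))) = 0 := by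
  let f (l : Fin 6 → Fin 3 → F) : W := pairing φ (tripleRatio F l) (blochClass (tripleRatio F l))
  calc
    _ = ∑ i : Fin 7, (-1 : ℤ) ^ ((i : ℕ) + 1) • ∑ σ : Equiv.Perm (Fin 6),
          (Equiv.Perm.sign σ : ℤ) • f fun j => x (i.succAbove (σ j)) := by
      simp only [map_sum, map_zsmul, apply_deltaBS_single, hru, f]
    _ = -altSum x fun y => f (y ∘ Fin.succ) := by
      rw [← sum_succAbove_eq_altSum_succ, ← Finset.sum_neg_distrib]
      simp only [pow_succ, mul_neg_one, neg_smul]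
    _ = -altSum x fun y => pairing φ (rho y) (blochClass (rho y)) := by
      rw [altSum_comp_succ, Even.neg_one_pow (by decide), one_smul]
      rfl
    _ = 0 := by
      rw [altSum_pairing_rho_blochClass_rho_eq_zero hW φ
        (inGeneralPosition_of_linearIndependent hgen), neg_zero]

/-- for seven vectors `x_1,…,x_7 ∈ F³` in generic position, the element
`Σ_{i=1}^7 (−1)^i r_3(x_1,…,x̂_i,…,x_7)` of `ℤ[F^*]`, where
`r_3(l_0,…,l_5) = Alt_6 {ρ(l_0,…,l_5)}`, is killed by `δ : ℤ[F^*] → B_2(F) ⊗ F^*`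
after tensoring with ℚ.  The units `ru i σ` are the values of the generalized
cross-ratios `ρ(x ∘ (omit i) ∘ σ)` (which are nonzero by genericity). -/
theorem statement_7 [Infinite F] (x : Fin 7 → Fin 3 → F)
    (hgen : ∀ s : Finset (Fin 7), s.card = 3 →
      LinearIndependent F (fun i : s => x i))
    (ru : Fin 7 → Equiv.Perm (Fin 6) → Fˣ)
    (hru : ∀ (i : Fin 7) (σ : Equiv.Perm (Fin 6)),
      (ru i σ : F) = tripleRatio F (fun j => x (i.succAbove (σ j)))) :
    (deltaBS F (∑ i : Fin 7, (-1 : ℤ) ^ ((i : ℕ) + 1) •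
          ∑ σ : Equiv.Perm (Fin 6),
            ((Equiv.Perm.sign σ : ℤˣ) : ℤ) • Finsupp.single (ru i σ) (1 : ℤ)))
        ⊗ₜ[ℤ] (1 : ℚ)
      = (0 : (B2 F ⊗[ℤ] Additive Fˣ) ⊗[ℤ] ℚ) :=
  statement_7_general (isSMulRegular_two_tensor_rat _)
    ((TensorProduct.mk ℤ _ ℚ).flip 1).toAddMonoidHom x hgen ru hru

end
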